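/- In a nonlinear model (p_k ≠ k/m for some 0 ≤ k ≤ m) with X_0 > 0 and Y_0 > 0, if z ∈ Z_P ∩ (0,1) is an unstable zero, i.e., there exists ε > 0 such that P < 0 on (z−ε, z) and P > 0 on (z, z+ε), then P(lim_{n→∞} a_n = z) = 0. -/

import Mathlib

open MeasureTheory ProbabilityTheory Filter Set

noncomputable section

/-- The polynomial `P(z) = (1/2) ∑_{k=0}^m C(m,k) z^k (1-z)^{m-k} (p_k - k/m)`. -/
def polyP (m : ℕ) (p : ℕ → ℝ) (z : ℝ) : ℝ :=
  (1 / 2) * ∑ k ∈ Finset.range (m + 1),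
    (m.choose k : ℝ) * z ^ k * (1 - z) ^ (m - k) * (p k - (k : ℝ) / m)

/-- The zero set `Z_P = {z ∈ [0,1] : P(z) = 0}`. -/
def zeroSetP (m : ℕ) (p : ℕ → ℝ) : Set ℝ :=
  {z ∈ Set.Icc (0 : ℝ) 1 | polyP m p z = 0}

/-- The two-type preferential attachment process with `m` edges per new node and type
adoption parameters `p 0, …, p m`, defined on a probability space `(Ω, μ)` with filtration
`F`.  `A n` is the number of red nodes and `X n` the sum of the degrees of red nodes at time
`n`; the transition probabilities given `F n` are those of the model: a number `k` of red
neighbours is drawn from the `Binomial(m, x_n)` distribution, and then the new node is red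
with probability `p k` (adding `1` to the red nodes and `k + m` to the red degrees) and blue
with probability `1 - p k` (adding `k` to the red degrees). -/
structure PAProcess (Ω : Type) [MeasurableSpace Ω] where
  μ : Measure Ω
  isProb : IsProbabilityMeasure μ
  m : ℕ
  hm : 1 ≤ m
  p : ℕ → ℝ
  hp : ∀ k ≤ m, p k ∈ Set.Icc (0 : ℝ) 1
  A : ℕ → Ω → ℕ
  X : ℕ → Ω → ℕ
  F : Filtration ℕ ‹MeasurableSpace Ω›
  A0 : ℕ
  B0 : ℕ
  X0 : ℕ
  Y0 : ℕ
  hA0 : ∀ ω, A 0 ω = A0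
  hX0 : ∀ ω, X 0 ω = X0
  adaptedA : ∀ n, Measurable[F n] (A n)
  adaptedX : ∀ n, Measurable[F n] (X n)
  hXle : ∀ n ω, X n ω ≤ X0 + Y0 + 2 * m * n
  step_red : ∀ n, ∀ k ≤ m,
    μ[Set.indicator {ω | A (n + 1) ω = A n ω + 1 ∧ X (n + 1) ω = X n ω + k + m}
        (fun _ => (1 : ℝ)) | F n]
      =ᵐ[μ] fun ω => (m.choose k : ℝ) *
        ((X n ω : ℝ) / ((X0 : ℝ) + Y0 + 2 * m * n)) ^ k *
        (1 - (X n ω : ℝ) / ((X0 : ℝ) + Y0 + 2 * m * n)) ^ (m - k) * p k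
  step_blue : ∀ n, ∀ k ≤ m,
    μ[Set.indicator {ω | A (n + 1) ω = A n ω ∧ X (n + 1) ω = X n ω + k}
        (fun _ => (1 : ℝ)) | F n]
      =ᵐ[μ] fun ω => (m.choose k : ℝ) *
        ((X n ω : ℝ) / ((X0 : ℝ) + Y0 + 2 * m * n)) ^ k *
        (1 - (X n ω : ℝ) / ((X0 : ℝ) + Y0 + 2 * m * n)) ^ (m - k) * (1 - p k)

namespace PAProcess

variable {Ω : Type} [MeasurableSpace Ω] (P : PAProcess Ω)

/-- Total degree `S_n = S_0 + 2mn`. -/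
def S (n : ℕ) : ℕ := P.X0 + P.Y0 + 2 * P.m * n

/-- Normalized red degree `x_n = X_n / S_n`. -/
def x (n : ℕ) (ω : Ω) : ℝ := (P.X n ω : ℝ) / (P.S n : ℝ)

/-- Normalized red node count `a_n = A_n / (A_0 + B_0 + n)`. -/
def a (n : ℕ) (ω : Ω) : ℝ := (P.A n ω : ℝ) / ((P.A0 : ℝ) + P.B0 + n)

/-- The polynomial `P` of the process. -/
def poly : ℝ → ℝ := polyP P.m P.p

/-- The zero set `Z_P` of the process. -/
def Zp : Set ℝ := zeroSetP P.m P.p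

end PAProcess

/-!
If `a_n → z` then `x_n → z` almost surely: the number of red neighbours of a new node has
conditional mean `m x_n`, so by the law of large numbers for martingale differences `2 x_n` minus
the running average of `x` is asymptotically `a_n`, and Mercer's theorem inverts this relation.

It remains to see that `x_n` almost surely does not converge to `z`. Near `z` the drift of `x`
points away from `z`, and its noise has variance of order `n⁻²`, so along paths that stay near `z`
the weights `exp (-l n (x_n - z)²)` lose on average a fraction of order `1 / n` per step, and their
expectation tends to `0`. Hence for large `n` the path is likely to be at distance at least
`√(R / n)` from `z`. From such a distance, the outward drift and the total remaining variance, of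
order `1 / n`, allow a return to `z` with probability at most `O(1 / R)`, as the bump function
`max (R / n - (x - z)²) 0 ^ 2` shows; now let `R → ∞`.

The noise is nondegenerate at `z` unless every new node has, almost surely, the type opposite to
its single neighbour; in that case the equilibrium is stable.
-/

open scoped Topology

section Sequences

variable {u γ r t ξ : ℕ → ℝ} {α L : ℝ}

lemma tendsto_zero_of_le_one_sub_mul (hu : ∀ n, 0 ≤ u n)
    (hγ : Tendsto (fun n => ∑ i ∈ Finset.range n, γ i) atTop atTop)
    (h : ∀ᶠ n in atTop, u (n + 1) ≤ (1 - γ n) * u n) :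
    Tendsto u atTop (𝓝 0) := by
  obtain ⟨N, hN⟩ := eventually_atTop.1 h
  set G : ℕ → ℝ := fun n => ∑ i ∈ Finset.range n, γ i
  have hbound : ∀ n ≥ N, u n * Real.exp (G n) ≤ u N * Real.exp (G N) := by
    intro n hn
    induction n, hn using Nat.le_induction with
    | base => rfl
    | succ n hn ih =>
      have hstep : u (n + 1) ≤ Real.exp (-γ n) * u n :=
        (hN n hn).trans <| mul_le_mul_of_nonneg_right (Real.one_sub_le_exp_neg _) (hu n)
      calc u (n + 1) * Real.exp (G (n + 1))
          ≤ Real.exp (-γ n) * u n * Real.exp (G (n + 1)) := by gcongr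
        _ = u n * Real.exp (G n) := by
            rw [mul_right_comm, ← Real.exp_add, mul_comm,
              show G (n + 1) = G n + γ n from Finset.sum_range_succ γ n]
            ring_nf
        _ ≤ u N * Real.exp (G N) := ih
  have hlim : Tendsto (fun n => u N * Real.exp (G N) * Real.exp (-G n)) atTop (𝓝 0) := by
    simpa using (Real.tendsto_exp_neg_atTop_nhds_zero.comp hγ).const_mul (u N * Real.exp (G N))
  refine squeeze_zero' (.of_forall hu) ?_ hlim
  filter_upwards [eventually_ge_atTop N] with n hn
  rw [Real.exp_neg, ← div_eq_mul_inv, le_div_iff₀ (Real.exp_pos _)]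
  exact hbound n hn

lemma tendsto_zero_of_le_convexCombination (hu : ∀ n, 0 ≤ u n)
    (hγ : Tendsto (fun n => ∑ i ∈ Finset.range n, γ i) atTop atTop)
    (hγ_mem : ∀ᶠ n in atTop, γ n ∈ Icc 0 1) (hr : Tendsto r atTop (𝓝 0))
    (h : ∀ᶠ n in atTop, u (n + 1) ≤ (1 - γ n) * u n + γ n * r n) :
    Tendsto u atTop (𝓝 0) := by
  refine tendsto_order.2 ⟨fun b hb => .of_forall fun n => hb.trans_le (hu n), fun b hb => ?_⟩
  have hexcess : Tendsto (fun n => max (u n - b / 2) 0) atTop (𝓝 0) := by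
    refine tendsto_zero_of_le_one_sub_mul (fun n => le_max_right _ _) hγ ?_
    filter_upwards [h, hγ_mem, hr.eventually_le_const (half_pos hb)] with n hn ⟨h0, h1⟩ hrn
    refine max_le ?_ (mul_nonneg (sub_nonneg.2 h1) (le_max_right _ _))
    calc u (n + 1) - b / 2 ≤ (1 - γ n) * (u n - b / 2) + γ n * (r n - b / 2) := by linarith
      _ ≤ (1 - γ n) * (u n - b / 2) := by nlinarith
      _ ≤ (1 - γ n) * max (u n - b / 2) 0 :=
          mul_le_mul_of_nonneg_left (le_max_left _ _) (sub_nonneg.2 h1)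
  filter_upwards [hexcess.eventually_lt_const (half_pos hb)] with n hn
  linarith [(le_max_left _ _).trans_lt hn]

lemma tendsto_sum_one_div_mul_succ_atTop (hα : 0 < α) :
    Tendsto (fun n => ∑ i ∈ Finset.range n, 1 / (α * ((i : ℝ) + 1))) atTop atTop := by
  simpa only [one_div, mul_inv, Finset.mul_sum] using
    (Real.tendsto_sum_range_one_div_nat_succ_atTop.const_mul_atTop (inv_pos.2 hα))

/-- Mercer's theorem. -/
lemma tendsto_of_tendsto_add_average (hα : 0 < α)
    (h : Tendsto (fun n : ℕ => α * t n + (1 - α) * ((∑ i ∈ Finset.range n, t i) / n)) atTop (𝓝 L)) :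
    Tendsto t atTop (𝓝 L) := by
  set s : ℕ → ℝ := fun n => (∑ i ∈ Finset.range n, t i) / n
  set y : ℕ → ℝ := fun n => α * t n + (1 - α) * s n
  have hrec : ∀ᶠ n : ℕ in atTop, s (n + 1) - L
      = (1 - 1 / (α * ((n : ℝ) + 1))) * (s n - L) + 1 / (α * ((n : ℝ) + 1)) * (y n - L) := by
    filter_upwards [eventually_ne_atTop 0] with n hn
    have hn' : (n : ℝ) ≠ 0 := Nat.cast_ne_zero.2 hn
    simp only [s, y, Finset.sum_range_succ, Nat.cast_add_one]
    field_simp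
    ring
  have hγ_mem : ∀ᶠ n : ℕ in atTop, 1 / (α * ((n : ℝ) + 1)) ∈ Icc (0 : ℝ) 1 := by
    filter_upwards [tendsto_natCast_atTop_atTop.eventually_ge_atTop (1 / α)] with n hn
    have : 1 ≤ α * n := (div_le_iff₀' hα).1 hn
    exact ⟨by positivity, div_le_one_of_le₀ (by linarith) (by positivity)⟩
  have hs : Tendsto s atTop (𝓝 L) := by
    rw [tendsto_iff_norm_sub_tendsto_zero] at h ⊢
    refine tendsto_zero_of_le_convexCombination (fun n => norm_nonneg _)
      (tendsto_sum_one_div_mul_succ_atTop hα) hγ_mem h ?_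
    filter_upwards [hrec, hγ_mem] with n hn ⟨h0, h1⟩
    rw [hn]
    refine (norm_add_le _ _).trans_eq ?_
    rw [norm_mul, norm_mul, Real.norm_of_nonneg h0, Real.norm_of_nonneg (sub_nonneg.2 h1)]
  have hlim := (h.sub (hs.const_mul (1 - α))).div_const α
  rw [show (L - (1 - α) * L) / α = L by field_simp; ring] at hlim
  refine hlim.congr fun n => ?_
  simp only [s]
  field_simp
  ring

/-- Kronecker's lemma for the weights `1, 2, 3, …`. -/
lemma tendsto_average_zero_of_tendsto_sum_div
    (h : Tendsto (fun n => ∑ i ∈ Finset.range n, ξ i / ((i : ℝ) + 1)) atTop (𝓝 L)) :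
    Tendsto (fun n : ℕ => (∑ i ∈ Finset.range n, ξ i) / n) atTop (𝓝 0) := by
  set M : ℕ → ℝ := fun n => ∑ i ∈ Finset.range n, ξ i / ((i : ℝ) + 1)
  have hparts (n : ℕ) : ∑ i ∈ Finset.range n, ξ i = n * M n - ∑ i ∈ Finset.range n, M i := by
    induction n with
    | zero => simp
    | succ n ih =>
      simp only [Finset.sum_range_succ, ih, M, Nat.cast_add_one]
      field_simp
      ring
  have hlim := h.sub h.cesaro
  rw [sub_self] at hlim
  refine hlim.congr' ?_
  filter_upwards [eventually_ne_atTop 0] with n hn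
  rw [hparts]
  field_simp

end Sequences

section ConditionalExpectation

variable {Ω : Type*} {m mΩ : MeasurableSpace Ω} {μ : Measure Ω}

lemma integrable_continuous_comp_of_ae_norm_le [IsFiniteMeasure μ] {E : Type*}
    [NormedAddCommGroup E] [ProperSpace E] {φ : E → ℝ} (hφ : Continuous φ) {f : Ω → E}
    (hf : AEStronglyMeasurable f μ) {C : ℝ} (hC : ∀ᵐ ω ∂μ, ‖f ω‖ ≤ C) :
    Integrable (fun ω => φ (f ω)) μ := by
  obtain ⟨D, hD⟩ := (isCompact_closedBall 0 C).exists_bound_of_continuousOn hφ.continuousOn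
  exact .of_bound (hφ.comp_aestronglyMeasurable hf) D
    (hC.mono fun ω hω => hD _ (mem_closedBall_zero_iff.2 hω))

lemma setIntegral_mul_condExp [IsFiniteMeasure μ] (hm : m ≤ mΩ) {s : Set Ω} {b f : Ω → ℝ}
    (hs : MeasurableSet[m] s) (hb : StronglyMeasurable[m] b) (hf : Integrable f μ)
    (hbf : IntegrableOn (fun ω => b ω * f ω) s μ) :
    ∫ ω in s, b ω * (μ[f | m]) ω ∂μ = ∫ ω in s, b ω * f ω ∂μ := by
  have hmul : (fun ω => s.indicator b ω * f ω) = s.indicator (fun ω => b ω * f ω) :=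
    funext fun ω => (indicator_mul_left s b f).symm
  have hint : Integrable (s.indicator b * f) μ :=
    (integrable_indicator_iff (hm s hs)).2 hbf |>.congr (.of_eq hmul.symm)
  calc ∫ ω in s, b ω * (μ[f | m]) ω ∂μ
      = ∫ ω, s.indicator b ω * (μ[f | m]) ω ∂μ := by
        simp_rw [← integral_indicator (hm s hs), indicator_mul_left]
    _ = ∫ ω, (μ[s.indicator b * f | m]) ω ∂μ :=
        integral_congr_ae (condExp_mul_of_stronglyMeasurable_left (hb.indicator hs) hint hf).symm
    _ = ∫ ω in s, b ω * f ω ∂μ := by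
        rw [integral_condExp hm, ← integral_indicator (hm s hs), ← hmul]; rfl

variable {ι : Type*} [Fintype ι] {E : ι → Set Ω}

lemma ae_exists_mem_of_sum_condExp_indicator_eq_one [IsProbabilityMeasure μ] (hm : m ≤ mΩ)
    (hE : ∀ i, MeasurableSet (E i)) (hdisj : Pairwise (Function.onFun Disjoint E))
    (hsum : ∀ᵐ ω ∂μ, ∑ i, (μ[(E i).indicator (fun _ => (1 : ℝ)) | m]) ω = 1) :
    ∀ᵐ ω ∂μ, ∃ i, ω ∈ E i := by
  have hprob : μ.real (⋃ i, E i) = 1 := calc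
    μ.real (⋃ i, E i) = ∑ i, μ.real (E i) := measureReal_iUnion_fintype hdisj hE
    _ = ∑ i, ∫ ω, (μ[(E i).indicator (fun _ => (1 : ℝ)) | m]) ω ∂μ := by
        simp [integral_condExp hm, integral_indicator_const, hE]
    _ = ∫ ω, ∑ i, (μ[(E i).indicator (fun _ => (1 : ℝ)) | m]) ω ∂μ :=
        (integral_finsetSum _ fun i _ => integrable_condExp).symm
    _ = 1 := by rw [integral_congr_ae hsum]; simp
  have hcompl : μ.real (⋃ i, E i)ᶜ = 0 := by
    rw [probReal_compl_eq_one_sub (.iUnion hE), hprob, sub_self]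
  filter_upwards [measure_eq_zero_iff_ae_notMem.1 ((measureReal_eq_zero_iff).1 hcompl)] with ω hω
  simpa using hω

lemma condExp_ae_eq_sum_of_partition [IsFiniteMeasure μ]
    (hE : ∀ i, MeasurableSet (E i)) (hdisj : Pairwise (Function.onFun Disjoint E))
    (hcover : ∀ᵐ ω ∂μ, ∃ i, ω ∈ E i) {g : ι → Ω → ℝ} {H : Ω → ℝ}
    (hg : ∀ i, StronglyMeasurable[m] (g i)) (hgi : ∀ i, Integrable (g i) μ)
    (hH : ∀ i, ∀ ω ∈ E i, H ω = g i ω) :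
    μ[H | m] =ᵐ[μ] fun ω => ∑ i, g i ω * (μ[(E i).indicator (fun _ => (1 : ℝ)) | m]) ω := by
  have hmul (i : ι) : g i * (E i).indicator (fun _ => (1 : ℝ)) = (E i).indicator (g i) := by
    ext ω; by_cases hω : ω ∈ E i <;> simp [hω]
  have hint (i : ι) : Integrable (g i * (E i).indicator (fun _ => (1 : ℝ))) μ := by
    rw [hmul]; exact (hgi i).indicator (hE i)
  have hsum : H =ᵐ[μ] ∑ i, g i * (E i).indicator (fun _ => (1 : ℝ)) := by
    filter_upwards [hcover] with ω ⟨i, hi⟩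
    rw [Finset.sum_apply, Finset.sum_eq_single i, hmul, indicator_of_mem hi, hH i ω hi]
    · intro j _ hj
      rw [hmul, indicator_of_notMem (disjoint_left.1 (hdisj hj.symm) hi)]
    · exact fun h => (h (Finset.mem_univ i)).elim
  have hpull : ∀ᵐ ω ∂μ, ∀ i, (μ[g i * (E i).indicator (fun _ => (1 : ℝ)) | m]) ω
      = g i ω * (μ[(E i).indicator (fun _ => (1 : ℝ)) | m]) ω :=
    ae_all_iff.2 fun i => condExp_mul_of_stronglyMeasurable_left (hg i) (hint i)
      ((integrable_const _).indicator (hE i))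
  filter_upwards [condExp_congr_ae (m := m) hsum,
    condExp_finsetSum (fun i (_ : i ∈ Finset.univ) => hint i) m, hpull] with ω h₁ h₂ h₃
  rw [h₁, h₂, Finset.sum_apply]
  exact Finset.sum_congr rfl fun i _ => h₃ i

end ConditionalExpectation

section MartingaleDifferences

variable {Ω : Type*} {mΩ : MeasurableSpace Ω} {μ : Measure Ω} {F : Filtration ℕ mΩ}
  {ξ : ℕ → Ω → ℝ} {c : ℕ → ℝ}

/-- A martingale difference sequence with deterministic bounds: `ξ n`, revealed at time `n + 1`, is
centred given `F n` and bounded by `c n`. -/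
structure IsMartingaleDifference (ξ : ℕ → Ω → ℝ) (F : Filtration ℕ mΩ) (μ : Measure Ω)
    (c : ℕ → ℝ) : Prop where
  stronglyMeasurable (n : ℕ) : StronglyMeasurable[F (n + 1)] (ξ n)
  abs_le (n : ℕ) : ∀ᵐ ω ∂μ, |ξ n ω| ≤ c n
  condExp_eq_zero (n : ℕ) : μ[ξ n | F n] =ᵐ[μ] 0

namespace IsMartingaleDifference

lemma stronglyMeasurable_sum (h : IsMartingaleDifference ξ F μ c) (n : ℕ) :
    StronglyMeasurable[F n] (fun ω => ∑ i ∈ Finset.range n, ξ i ω) :=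
  Finset.stronglyMeasurable_fun_sum _ fun i hi =>
    (h.stronglyMeasurable i).mono (F.mono (Finset.mem_range.1 hi))

lemma div_succ {C : ℝ} (h : IsMartingaleDifference ξ F μ fun _ => C) :
    IsMartingaleDifference (fun n ω => ξ n ω / ((n : ℝ) + 1)) F μ fun n => C / ((n : ℝ) + 1) where
  stronglyMeasurable n := (h.stronglyMeasurable n).div stronglyMeasurable_const
  abs_le n := (h.abs_le n).mono fun ω hω => by
    rw [abs_div, abs_of_pos (n.cast_add_one_pos : (0 : ℝ) < n + 1)]
    gcongr
  condExp_eq_zero n := by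
    have hsmul : (fun ω => ξ n ω / ((n : ℝ) + 1)) = ((n : ℝ) + 1)⁻¹ • ξ n := by
      ext ω; simp [div_eq_inv_mul]
    rw [hsmul]
    filter_upwards [condExp_smul (μ := μ) ((n : ℝ) + 1)⁻¹ (ξ n) (F n), h.condExp_eq_zero n]
      with ω h₁ h₂
    simp [h₁, h₂]

lemma memLp_two [IsFiniteMeasure μ] (h : IsMartingaleDifference ξ F μ c) (n : ℕ) :
    MemLp (ξ n) 2 μ :=
  .of_bound ((h.stronglyMeasurable n).mono (F.le _)).aestronglyMeasurable (c n) (h.abs_le n)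

lemma memLp_two_sum [IsFiniteMeasure μ] (h : IsMartingaleDifference ξ F μ c) (n : ℕ) :
    MemLp (fun ω => ∑ i ∈ Finset.range n, ξ i ω) 2 μ :=
  memLp_finsetSum _ fun i _ => h.memLp_two i

lemma martingale_sum [IsFiniteMeasure μ] (h : IsMartingaleDifference ξ F μ c) :
    Martingale (fun n ω => ∑ i ∈ Finset.range n, ξ i ω) F μ := by
  refine martingale_of_condExp_sub_eq_zero_nat h.stronglyMeasurable_sum
    (fun n => (h.memLp_two_sum n).integrable one_le_two) fun n => ?_
  convert h.condExp_eq_zero n using 2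
  ext ω
  simp [Finset.sum_range_succ]

variable [IsProbabilityMeasure μ]

lemma integral_sq_le (h : IsMartingaleDifference ξ F μ c) (n : ℕ) :
    ∫ ω, ξ n ω ^ 2 ∂μ ≤ c n ^ 2 := by
  have hle : ∀ᵐ ω ∂μ, ξ n ω ^ 2 ≤ c n ^ 2 := (h.abs_le n).mono fun ω hω =>
    sq_le_sq' (neg_le_of_abs_le hω) (le_of_abs_le hω)
  simpa using integral_mono_ae (h.memLp_two n).integrable_sq (integrable_const (c n ^ 2)) hle

lemma integral_sq_sum_le (h : IsMartingaleDifference ξ F μ c) (n : ℕ) :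
    ∫ ω, (∑ i ∈ Finset.range n, ξ i ω) ^ 2 ∂μ ≤ ∑ i ∈ Finset.range n, c i ^ 2 := by
  induction n with
  | zero => simp
  | succ n ih =>
    set M : Ω → ℝ := fun ω => ∑ i ∈ Finset.range n, ξ i ω
    have hMξ : Integrable (fun ω => M ω * ξ n ω) μ :=
      (h.memLp_two_sum n).integrable_mul (h.memLp_two n)
    have horth : ∫ ω, M ω * ξ n ω ∂μ = 0 := by
      have hpull := setIntegral_mul_condExp (F.le n) .univ (h.stronglyMeasurable_sum n)
        ((h.memLp_two n).integrable one_le_two) hMξ.integrableOn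
      simp only [setIntegral_univ] at hpull
      rw [← hpull, integral_eq_zero_of_ae]
      filter_upwards [h.condExp_eq_zero n] with ω hω
      simp [hω]
    have hexpand (ω : Ω) : (∑ i ∈ Finset.range (n + 1), ξ i ω) ^ 2
        = M ω ^ 2 + 2 * (M ω * ξ n ω) + ξ n ω ^ 2 := by
      rw [Finset.sum_range_succ]; ring
    have hM2 : Integrable (fun ω => M ω ^ 2) μ := (h.memLp_two_sum n).integrable_sq
    simp_rw [hexpand]
    rw [integral_add (by exact hM2.add (hMξ.const_mul 2)) (h.memLp_two n).integrable_sq,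
      integral_add hM2 (hMξ.const_mul 2), integral_const_mul, horth, Finset.sum_range_succ]
    linarith [h.integral_sq_le n]

lemma eLpNorm_one_sum_le (h : IsMartingaleDifference ξ F μ c) (hc : Summable fun n => c n ^ 2)
    (n : ℕ) :
    eLpNorm (fun ω => ∑ i ∈ Finset.range n, ξ i ω) 1 μ
      ≤ (1 + ∑' i, c i ^ 2).toNNReal := by
  have hint := (h.memLp_two_sum n).integrable one_le_two
  have hint2 := (h.memLp_two_sum n).integrable_sq
  rw [eLpNorm_one_eq_lintegral_enorm, ← ofReal_integral_norm_eq_lintegral_enorm hint]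
  refine ENNReal.ofReal_le_ofReal ?_
  calc ∫ ω, ‖∑ i ∈ Finset.range n, ξ i ω‖ ∂μ
      ≤ ∫ ω, (1 + (∑ i ∈ Finset.range n, ξ i ω) ^ 2) ∂μ := by
        refine integral_mono hint.norm ((integrable_const 1).add hint2) fun ω => ?_
        rw [Real.norm_eq_abs, ← sq_abs]
        nlinarith [sq_nonneg (|∑ i ∈ Finset.range n, ξ i ω| - 1)]
    _ = 1 + ∫ ω, (∑ i ∈ Finset.range n, ξ i ω) ^ 2 ∂μ := by
        rw [integral_add (integrable_const 1) hint2]; simp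
    _ ≤ 1 + ∑' i, c i ^ 2 := by
        gcongr
        exact (h.integral_sq_sum_le n).trans (hc.sum_le_tsum _ fun i _ => sq_nonneg _)

lemma ae_exists_tendsto_sum (h : IsMartingaleDifference ξ F μ c)
    (hc : Summable fun n => c n ^ 2) :
    ∀ᵐ ω ∂μ, ∃ L, Tendsto (fun n => ∑ i ∈ Finset.range n, ξ i ω) atTop (𝓝 L) :=
  h.martingale_sum.submartingale.exists_ae_tendsto_of_bdd (h.eLpNorm_one_sum_le hc)

lemma ae_tendsto_average_zero {C : ℝ} (h : IsMartingaleDifference ξ F μ fun _ => C) :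
    ∀ᵐ ω ∂μ, Tendsto (fun n : ℕ => (∑ i ∈ Finset.range n, ξ i ω) / n) atTop (𝓝 0) := by
  have hc : Summable fun n : ℕ => (C / ((n : ℝ) + 1)) ^ 2 := by
    have hsq : Summable fun n : ℕ => 1 / ((n + 1 : ℕ) : ℝ) ^ 2 :=
      (summable_nat_add_iff 1).2 (Real.summable_one_div_nat_pow.2 one_lt_two)
    exact (hsq.mul_left (C ^ 2)).congr fun n => by rw [div_pow]; push_cast; ring
  filter_upwards [h.div_succ.ae_exists_tendsto_sum hc] with ω ⟨L, hL⟩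
  exact tendsto_average_zero_of_tendsto_sum_div hL

end IsMartingaleDifference

end MartingaleDifferences

section Majorants

variable {K δ y d θ s : ℝ}

lemma sq_add_two_mul_le (hy : |y| ≤ δ) (hθ : |θ| ≤ K) : (y + 2 * θ) ^ 2 ≤ (δ + 2 * K) ^ 2 := by
  rw [abs_le] at hy hθ
  exact sq_le_sq' (by linarith) (by linarith)

lemma abs_mul_add_two_mul_add_le (hy : |y| ≤ δ) (hθ : |θ| ≤ K) (hs : 1 ≤ s) :
    |y * (y + 2 * θ) + θ ^ 2 / s| ≤ 2 * (δ + 2 * K) ^ 2 := by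
  have hδ : 0 ≤ δ := (abs_nonneg y).trans hy
  have hK : 0 ≤ K := (abs_nonneg θ).trans hθ
  have hsum : |y + 2 * θ| ≤ δ + 2 * K :=
    abs_le_of_sq_le_sq (sq_add_two_mul_le hy hθ) (by positivity)
  calc |y * (y + 2 * θ) + θ ^ 2 / s|
      ≤ |y * (y + 2 * θ)| + |θ ^ 2 / s| := abs_add_le _ _
    _ = |y| * |y + 2 * θ| + θ ^ 2 / s := by
        rw [abs_mul, abs_of_nonneg (div_nonneg (sq_nonneg θ) (zero_le_one.trans hs))]
    _ ≤ δ * (δ + 2 * K) + K ^ 2 := by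
        gcongr
        exact (div_le_self (sq_nonneg θ) hs).trans (sq_le_sq.2 (hθ.trans (le_abs_self K)))
    _ ≤ 2 * (δ + 2 * K) ^ 2 := by nlinarith [mul_nonneg hδ hK]

lemma sq_mul_add_two_mul_add_le (hy : |y| ≤ δ) (hθ : |θ| ≤ K) :
    (y * (y + 2 * θ) + θ ^ 2 / s) ^ 2 ≤ 2 * (δ + 2 * K) ^ 2 * y ^ 2 + 2 * K ^ 4 / s ^ 2 := by
  have hθ4 : θ ^ 4 ≤ K ^ 4 := by
    rw [← (show Even 4 by decide).pow_abs θ]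
    gcongr
  calc (y * (y + 2 * θ) + θ ^ 2 / s) ^ 2
      ≤ 2 * ((y * (y + 2 * θ)) ^ 2 + (θ ^ 2 / s) ^ 2) := add_sq_le
    _ = 2 * (y + 2 * θ) ^ 2 * y ^ 2 + 2 * θ ^ 4 / s ^ 2 := by ring
    _ ≤ 2 * (δ + 2 * K) ^ 2 * y ^ 2 + 2 * K ^ 4 / s ^ 2 := by
        gcongr 2 * ?_ * y ^ 2 + 2 * ?_ / s ^ 2
        exact sq_add_two_mul_le hy hθ

lemma exp_neg_mul_add_sq_le {l : ℝ} (hδ : 0 < δ) (hs : 1 ≤ s)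
    (hl : l = 1 / (2 * (δ + 2 * K) ^ 2)) (hy : |y| ≤ δ) (hd : |d| ≤ K / s) :
    Real.exp (-(l * s) * (y + d) ^ 2) ≤
      (1 + 2 * l ^ 2 * K ^ 4 / s ^ 2) * Real.exp (-(l * (s - 1)) * y ^ 2)
        - 2 * l * s * Real.exp (-(l * (s - 1)) * y ^ 2) * (y * d)
        - l * s * Real.exp (-(l * (s - 1)) * y ^ 2) * d ^ 2 := by
  have hs0 : 0 < s := by linarith
  have hθ : |s * d| ≤ K := by rwa [abs_mul, abs_of_pos hs0, ← le_div_iff₀' hs0]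
  have hK : 0 ≤ K := (abs_nonneg _).trans hθ
  have hl0 : 0 < l := by rw [hl]; positivity
  have hlδ : l * (2 * (δ + 2 * K) ^ 2) = 1 := by rw [hl]; field_simp
  set w : ℝ := y * (y + 2 * (s * d)) + (s * d) ^ 2 / s with hw_def
  have hw : w = y ^ 2 + 2 * s * (y * d) + s * d ^ 2 := by
    rw [hw_def]; field_simp
  have hw_abs : |-(l * w)| ≤ 1 := by
    rw [abs_neg, abs_mul, abs_of_pos hl0, ← hlδ]
    gcongr
    exact abs_mul_add_two_mul_add_le hy hθ hs
  have hw_sq : (l * w) ^ 2 ≤ l * y ^ 2 + 2 * l ^ 2 * K ^ 4 / s ^ 2 := calc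
    (l * w) ^ 2 ≤ l ^ 2 * (2 * (δ + 2 * K) ^ 2 * y ^ 2 + 2 * K ^ 4 / s ^ 2) := by
        rw [mul_pow]; gcongr; exact sq_mul_add_two_mul_add_le hy hθ
    _ = l * (2 * (δ + 2 * K) ^ 2) * l * y ^ 2 + 2 * l ^ 2 * K ^ 4 / s ^ 2 := by ring
    _ = l * y ^ 2 + 2 * l ^ 2 * K ^ 4 / s ^ 2 := by rw [hlδ, one_mul]
  calc Real.exp (-(l * s) * (y + d) ^ 2)
      = Real.exp (-(l * (s - 1)) * y ^ 2) * Real.exp (-(l * w)) := by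
        rw [← Real.exp_add, hw]; ring_nf
    _ ≤ Real.exp (-(l * (s - 1)) * y ^ 2) * (1 - l * w + (l * w) ^ 2) := by
        gcongr
        linarith [le_of_abs_le (Real.abs_exp_sub_one_sub_id_le hw_abs), neg_sq (l * w)]
    _ ≤ Real.exp (-(l * (s - 1)) * y ^ 2)
          * (1 + 2 * l ^ 2 * K ^ 4 / s ^ 2 - 2 * l * s * (y * d) - l * s * d ^ 2) := by
        gcongr
        rw [hw] at hw_sq ⊢
        linarith
    _ = _ := by ring

/-- The bump of height `r ^ 4` over the interval `[-r, r]`, used as a Lyapunov function for the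
return of a process to the equilibrium: it is `C¹`, and its second derivative is `O(r ^ 2)`. -/
def bump (r y : ℝ) : ℝ := max (r ^ 2 - y ^ 2) 0 ^ 2

lemma continuous_bump (r : ℝ) : Continuous (bump r) := by
  unfold bump
  fun_prop

lemma bump_nonneg (r y : ℝ) : 0 ≤ bump r y := sq_nonneg _

lemma bump_zero (r : ℝ) : bump r 0 = r ^ 4 := by
  rw [bump, zero_pow two_ne_zero, sub_zero, max_eq_left (sq_nonneg r)]
  ring

lemma bump_le (r y : ℝ) : bump r y ≤ r ^ 4 := by
  rw [← bump_zero r, bump, bump]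
  gcongr ?_ ^ 2
  exact max_le_max_right 0 (by nlinarith)

lemma bump_eq_zero {r : ℝ} (hr : 0 ≤ r) (hy : r ≤ |y|) : bump r y = 0 := by
  have hsq : r ^ 2 ≤ y ^ 2 := by
    rw [← sq_abs y]
    gcongr
  rw [bump, max_eq_right (sub_nonpos.2 hsq), zero_pow two_ne_zero]

lemma bump_add_le {r : ℝ} (hr : 0 ≤ r) (y d : ℝ) :
    bump r (y + d) ≤ bump r y - 4 * max (r ^ 2 - y ^ 2) 0 * (y * d) + 4 * r ^ 2 * d ^ 2 := by
  rcases le_total |y| r with hy | hy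
  · have hyr : y ^ 2 ≤ r ^ 2 := sq_le_sq' (neg_le_of_abs_le hy) (le_of_abs_le hy)
    rcases le_total r |y + d| with hout | hin
    · rw [bump_eq_zero hr hout, bump, max_eq_left (sub_nonneg.2 hyr)]
      have hyd : y * d ≤ r * |d| := by
        calc y * d ≤ |y| * |d| := by rw [← abs_mul]; exact le_abs_self _
          _ ≤ r * |d| := by gcongr
      nlinarith [sq_nonneg (r ^ 2 - y ^ 2 - 2 * (r * |d|)), sq_abs d]
    · have hydr : (y + d) ^ 2 ≤ r ^ 2 := sq_le_sq' (neg_le_of_abs_le hin) (le_of_abs_le hin)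
      rw [bump, bump, max_eq_left (sub_nonneg.2 hyr), max_eq_left (sub_nonneg.2 hydr)]
      have hsum : (2 * y + d) ^ 2 ≤ 2 * y ^ 2 + 2 * r ^ 2 := by
        nlinarith [add_sq_le (a := y) (b := y + d)]
      nlinarith [mul_le_mul_of_nonneg_left hsum (sq_nonneg d),
        mul_nonneg (sq_nonneg d) (sub_nonneg.2 hyr)]
  · have hyr : r ^ 2 ≤ y ^ 2 := by rw [← sq_abs y]; gcongr
    rw [bump_eq_zero hr hy, max_eq_right (sub_nonpos.2 hyr), mul_zero, zero_mul, sub_zero, zero_add]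
    suffices max (r ^ 2 - (y + d) ^ 2) 0 ≤ 2 * r * |d| by
      calc bump r (y + d) ≤ (2 * r * |d|) ^ 2 := by unfold bump; gcongr
        _ = 4 * r ^ 2 * d ^ 2 := by rw [mul_pow, sq_abs]; ring
    refine max_le ?_ (by positivity)
    have hdist : |y| ≤ |y + d| + |d| := by simpa using abs_sub (y + d) d
    rw [← sq_abs (y + d)]
    rcases le_total r |y + d| with hu | hu
    · nlinarith [mul_nonneg hr (abs_nonneg d)]
    · nlinarith [mul_nonneg (sub_nonneg.2 hu) (abs_nonneg d), abs_nonneg (y + d)]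

end Majorants

section Repelling

variable {Ω : Type*} {mΩ : MeasurableSpace Ω} {μ : Measure Ω} {F : Filtration ℕ mΩ}
  {x : ℕ → Ω → ℝ} {z δ K σ : ℝ} {N n : ℕ} {B : Set Ω}

/-- A stochastic approximation process with step size `1 / (n + 1)` for which the point `z` is an
unstable equilibrium: within distance `δ` of `z`, the drift points away from `z` (weakly) and the
noise does not degenerate. -/
structure IsRepelling (x : ℕ → Ω → ℝ) (F : Filtration ℕ mΩ) (μ : Measure Ω)
    (z δ K σ : ℝ) : Prop where
  adapted : Adapted F x
  abs_increment_le (n : ℕ) : ∀ᵐ ω ∂μ, |x (n + 1) ω - x n ω| ≤ K / ((n : ℝ) + 1)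
  drift_nonneg (n : ℕ) : ∀ᵐ ω ∂μ, |x n ω - z| < δ →
    0 ≤ (x n ω - z) * (μ[fun ω => x (n + 1) ω - x n ω | F n]) ω
  le_variance (n : ℕ) : ∀ᵐ ω ∂μ, |x n ω - z| < δ →
    σ / ((n : ℝ) + 1) ^ 2 ≤ (μ[fun ω => (x (n + 1) ω - x n ω) ^ 2 | F n]) ω

/-- The event that the path `x` stays within distance `δ` of `z` from time `N` to time `n`. -/
def confined (x : ℕ → Ω → ℝ) (z δ : ℝ) (N n : ℕ) : Set Ω :=
  {ω | ∀ j, N ≤ j → j ≤ n → |x j ω - z| < δ}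

lemma antitone_confined (x : ℕ → Ω → ℝ) (z δ : ℝ) (N : ℕ) : Antitone (confined x z δ N) :=
  fun _ _ hkn _ hω j hNj hjk => hω j hNj (hjk.trans hkn)

lemma measurableSet_confined (hx : Adapted F x) (z δ : ℝ) (N n : ℕ) :
    MeasurableSet[F n] (confined x z δ N n) := by
  simp only [confined, ofPred_forall]
  refine .iInter fun j => .iInter fun _ => .iInter fun hj => ?_
  have hball : MeasurableSet {y : ℝ | |y - z| < δ} :=
    measurableSet_lt (by fun_prop) measurable_const
  exact (hx j).mono (F.mono hj) le_rfl hball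

/-- The event that the path `x` converges to `z`, staying within distance `δ` of `z` from time `N`
on. -/
def trapped (x : ℕ → Ω → ℝ) (z δ : ℝ) (N : ℕ) : Set Ω :=
  {ω | (∀ j, N ≤ j → |x j ω - z| < δ) ∧ Tendsto (x · ω) atTop (𝓝 z)}

lemma trapped_subset_confined (x : ℕ → Ω → ℝ) (z δ : ℝ) (N n : ℕ) :
    trapped x z δ N ⊆ confined x z δ N n :=
  fun _ hω j hNj _ => hω.1 j hNj

lemma measurableSet_trapped (hx : ∀ n, Measurable (x n)) (z δ : ℝ) (N : ℕ) :
    MeasurableSet (trapped x z δ N) := by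
  rw [trapped, ofPred_and]
  refine .inter ?_ (measurableSet_tendsto (𝓝 z) hx)
  simp only [ofPred_forall]
  exact .iInter fun j => .iInter fun _ =>
    measurableSet_lt ((hx j).sub_const z).abs measurable_const

namespace IsRepelling

lemma measurable (h : IsRepelling x F μ z δ K σ) (n : ℕ) : Measurable (x n) :=
  (h.adapted n).mono (F.le n) le_rfl

lemma stronglyMeasurable_comp_sub (h : IsRepelling x F μ z δ K σ) {g : ℝ → ℝ}
    (hg : Continuous g) (n : ℕ) : StronglyMeasurable[F n] (fun ω => g (x n ω - z)) :=
  hg.comp_stronglyMeasurable ((h.adapted n).sub_const z).stronglyMeasurable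

variable [IsProbabilityMeasure μ]

lemma integrableOn_continuous_comp (h : IsRepelling x F μ z δ K σ) (hB : MeasurableSet B)
    (hBδ : ∀ ω ∈ B, |x n ω - z| < δ) {g : ℝ × ℝ → ℝ} (hg : Continuous g) :
    IntegrableOn (fun ω => g (x n ω - z, x (n + 1) ω - x n ω)) B μ := by
  refine integrable_continuous_comp_of_ae_norm_le hg (C := max δ (K / ((n : ℝ) + 1)))
    (((h.measurable n).sub_const z).prodMk
      ((h.measurable (n + 1)).sub (h.measurable n))).aestronglyMeasurable ?_
  filter_upwards [ae_restrict_mem hB, ae_restrict_of_ae (h.abs_increment_le n)] with ω hω hd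
  exact max_le_max (hBδ ω hω).le hd

lemma integrable_continuous_comp_increment (h : IsRepelling x F μ z δ K σ) {g : ℝ → ℝ}
    (hg : Continuous g) (n : ℕ) : Integrable (fun ω => g (x (n + 1) ω - x n ω)) μ :=
  integrable_continuous_comp_of_ae_norm_le hg
    ((h.measurable (n + 1)).sub (h.measurable n)).aestronglyMeasurable (h.abs_increment_le n)

lemma setIntegral_mul_drift_nonneg (h : IsRepelling x F μ z δ K σ) (hB : MeasurableSet[F n] B)
    (hBδ : ∀ ω ∈ B, |x n ω - z| < δ) {b : ℝ → ℝ} (hb : Continuous b) (hb0 : ∀ y, 0 ≤ b y) :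
    0 ≤ ∫ ω in B, b (x n ω - z) * ((x n ω - z) * (x (n + 1) ω - x n ω)) ∂μ := by
  have hpull := setIntegral_mul_condExp (F.le n) hB
    (h.stronglyMeasurable_comp_sub (g := fun y => b y * y) (by fun_prop) n)
    (h.integrable_continuous_comp_increment continuous_id n)
    (h.integrableOn_continuous_comp (F.le n _ hB) hBδ (g := fun q => b q.1 * q.1 * q.2)
      (by fun_prop))
  simp only [id_eq, mul_assoc (b _)] at hpull
  rw [← hpull]
  refine setIntegral_nonneg_ae (F.le n _ hB) ?_
  filter_upwards [h.drift_nonneg n] with ω hω hωB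
  exact mul_nonneg (hb0 _) (hω (hBδ ω hωB))

lemma le_setIntegral_mul_variance (h : IsRepelling x F μ z δ K σ) (hB : MeasurableSet[F n] B)
    (hBδ : ∀ ω ∈ B, |x n ω - z| < δ) {c : ℝ → ℝ} (hc : Continuous c) (hc0 : ∀ y, 0 ≤ c y) :
    ∫ ω in B, c (x n ω - z) * (σ / ((n : ℝ) + 1) ^ 2) ∂μ
      ≤ ∫ ω in B, c (x n ω - z) * (x (n + 1) ω - x n ω) ^ 2 ∂μ := by
  have hBm := F.le n _ hB
  have hcm := h.stronglyMeasurable_comp_sub hc n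
  have hpull := setIntegral_mul_condExp (F.le n) hB hcm
    (h.integrable_continuous_comp_increment (continuous_pow 2) n)
    (h.integrableOn_continuous_comp hBm hBδ (g := fun q => c q.1 * q.2 ^ 2) (by fun_prop))
  obtain ⟨D, hD⟩ := (isCompact_Icc (a := -δ) (b := δ)).exists_bound_of_continuousOn hc.continuousOn
  have hvar : Integrable (μ[fun ω => (x (n + 1) ω - x n ω) ^ 2 | F n]) (μ.restrict B) :=
    integrable_condExp.restrict
  have hint : IntegrableOn (fun ω => c (x n ω - z)
      * (μ[fun ω => (x (n + 1) ω - x n ω) ^ 2 | F n]) ω) B μ :=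
    hvar.bdd_mul (c := D) (hcm.mono (F.le n)).aestronglyMeasurable
      (by filter_upwards [ae_restrict_mem hBm] with ω hω using hD _ (abs_le.1 (hBδ ω hω).le))
  rw [← hpull]
  refine setIntegral_mono_on_ae
    (h.integrableOn_continuous_comp hBm hBδ (g := fun q => c q.1 * _) (by fun_prop)) hint hBm ?_
  filter_upwards [h.le_variance n] with ω hω hωB
  exact mul_le_mul_of_nonneg_left (hω (hBδ ω hωB)) (hc0 _)

lemma setIntegral_comp_succ_le (h : IsRepelling x F μ z δ K σ) (hB : MeasurableSet[F n] B)
    (hBδ : ∀ ω ∈ B, |x n ω - z| < δ) {φ a b c : ℝ → ℝ} (hφ : Continuous φ) (ha : Continuous a)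
    (hb : Continuous b) (hc : Continuous c) (hb0 : ∀ y, 0 ≤ b y) (hc0 : ∀ y, 0 ≤ c y)
    (hmaj : ∀ y d, |y| < δ → |d| ≤ K / ((n : ℝ) + 1) →
      φ (y + d) ≤ a y - b y * (y * d) - c y * d ^ 2) :
    ∫ ω in B, φ (x (n + 1) ω - z) ∂μ
      ≤ ∫ ω in B, (a (x n ω - z) - c (x n ω - z) * (σ / ((n : ℝ) + 1) ^ 2)) ∂μ := by
  have hBm := F.le n _ hB
  have hint {g : ℝ × ℝ → ℝ} (hg : Continuous g) := h.integrableOn_continuous_comp hBm hBδ hg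
  have ha_int := hint (g := fun q => a q.1) (by fun_prop)
  have hb_int := hint (g := fun q => b q.1 * (q.1 * q.2)) (by fun_prop)
  have hc_int := hint (g := fun q => c q.1 * q.2 ^ 2) (by fun_prop)
  calc ∫ ω in B, φ (x (n + 1) ω - z) ∂μ
      = ∫ ω in B, φ ((x n ω - z) + (x (n + 1) ω - x n ω)) ∂μ := by simp only [sub_add_sub_cancel']
    _ ≤ ∫ ω in B, (a (x n ω - z) - b (x n ω - z) * ((x n ω - z) * (x (n + 1) ω - x n ω))
          - c (x n ω - z) * (x (n + 1) ω - x n ω) ^ 2) ∂μ := by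
        refine setIntegral_mono_on_ae (hint (g := fun q => φ (q.1 + q.2)) (by fun_prop))
          ((ha_int.sub hb_int).sub hc_int) hBm ?_
        filter_upwards [h.abs_increment_le n] with ω hd hω using hmaj _ _ (hBδ ω hω) hd
    _ ≤ ∫ ω in B, (a (x n ω - z) - c (x n ω - z) * (σ / ((n : ℝ) + 1) ^ 2)) ∂μ := by
        rw [integral_sub (by exact ha_int.sub hb_int) hc_int, integral_sub ha_int hb_int,
          integral_sub ha_int (hint (g := fun q => c q.1 * _) (by fun_prop))]
        linarith [h.setIntegral_mul_drift_nonneg hB hBδ hb hb0,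
          h.le_setIntegral_mul_variance hB hBδ hc hc0]

lemma integrable_comp_sub (h : IsRepelling x F μ z δ K σ) {φ : ℝ → ℝ} (hφ : Continuous φ) {D : ℝ}
    (hD : ∀ y, ‖φ y‖ ≤ D) (n : ℕ) : Integrable (fun ω => φ (x n ω - z)) μ :=
  .of_bound ((h.stronglyMeasurable_comp_sub hφ n).mono (F.le n)).aestronglyMeasurable D
    (.of_forall fun _ => hD _)

lemma integrable_exp_neg_mul_sq (h : IsRepelling x F μ z δ K σ) {c : ℝ} (hc : 0 ≤ c) (n : ℕ) :
    Integrable (fun ω => Real.exp (-c * (x n ω - z) ^ 2)) μ := by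
  refine h.integrable_comp_sub (φ := fun y => Real.exp (-c * y ^ 2)) (by fun_prop) (D := 1)
    (fun y => ?_) n
  rw [Real.norm_of_nonneg (Real.exp_pos _).le, Real.exp_le_one_iff, neg_mul]
  exact neg_nonpos.2 (by positivity)

lemma setIntegral_exp_confined_succ_le (h : IsRepelling x F μ z δ K σ) (hδ : 0 < δ) {l : ℝ}
    (hl : l = 1 / (2 * (δ + 2 * K) ^ 2)) (hNn : N ≤ n) :
    ∫ ω in confined x z δ N (n + 1), Real.exp (-(l * (n + 1 : ℕ)) * (x (n + 1) ω - z) ^ 2) ∂μ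
      ≤ (1 + 2 * l ^ 2 * K ^ 4 / ((n : ℝ) + 1) ^ 2
            - l * ((n : ℝ) + 1) * (σ / ((n : ℝ) + 1) ^ 2))
          * ∫ ω in confined x z δ N n, Real.exp (-(l * n) * (x n ω - z) ^ 2) ∂μ := by
  have hl0 : 0 ≤ l := by rw [hl]; positivity
  set s : ℝ := (n : ℝ) + 1 with hs_def
  have hs : 1 ≤ s := le_add_of_nonneg_left n.cast_nonneg
  calc ∫ ω in confined x z δ N (n + 1), Real.exp (-(l * (n + 1 : ℕ)) * (x (n + 1) ω - z) ^ 2) ∂μ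
      ≤ ∫ ω in confined x z δ N n, Real.exp (-(l * s) * (x (n + 1) ω - z) ^ 2) ∂μ := by
        rw [Nat.cast_add_one, ← hs_def]
        exact setIntegral_mono_set
          (h.integrable_exp_neg_mul_sq (by positivity) (n + 1)).integrableOn
          (.of_forall fun ω => (Real.exp_pos _).le)
          (antitone_confined x z δ N n.le_succ).eventuallyLE
    _ ≤ ∫ ω in confined x z δ N n, ((1 + 2 * l ^ 2 * K ^ 4 / s ^ 2)
            * Real.exp (-(l * n) * (x n ω - z) ^ 2)
          - l * s * Real.exp (-(l * n) * (x n ω - z) ^ 2) * (σ / s ^ 2)) ∂μ :=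
        h.setIntegral_comp_succ_le (measurableSet_confined h.adapted z δ N n)
          (fun ω hω => hω n hNn le_rfl) (φ := fun y => Real.exp (-(l * s) * y ^ 2))
          (a := fun y => (1 + 2 * l ^ 2 * K ^ 4 / s ^ 2) * Real.exp (-(l * n) * y ^ 2))
          (b := fun y => 2 * l * s * Real.exp (-(l * n) * y ^ 2))
          (c := fun y => l * s * Real.exp (-(l * n) * y ^ 2))
          (by fun_prop) (by fun_prop) (by fun_prop) (by fun_prop)
          (fun y => by positivity) (fun y => by positivity)
          (fun y d hy hd => by
            simpa only [s, add_sub_cancel_right] using exp_neg_mul_add_sq_le hδ hs hl hy.le hd)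
    _ = (1 + 2 * l ^ 2 * K ^ 4 / s ^ 2 - l * s * (σ / s ^ 2))
          * ∫ ω in confined x z δ N n, Real.exp (-(l * n) * (x n ω - z) ^ 2) ∂μ := by
        rw [← integral_const_mul]
        congr 1 with ω
        ring

lemma tendsto_setIntegral_exp_confined (h : IsRepelling x F μ z δ K σ) (hδ : 0 < δ) (hK : 0 ≤ K)
    (hσ : 0 < σ) {l : ℝ} (hl : l = 1 / (2 * (δ + 2 * K) ^ 2)) (N : ℕ) :
    Tendsto (fun n : ℕ => ∫ ω in confined x z δ N n, Real.exp (-(l * n) * (x n ω - z) ^ 2) ∂μ)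
      atTop (𝓝 0) := by
  have hl0 : 0 < l := by rw [hl]; positivity
  refine tendsto_zero_of_le_one_sub_mul (γ := fun n => 1 / (2 / (l * σ) * ((n : ℝ) + 1)))
    (fun n => integral_nonneg fun ω => (Real.exp_pos _).le)
    (tendsto_sum_one_div_mul_succ_atTop (by positivity)) ?_
  filter_upwards [eventually_ge_atTop N, tendsto_natCast_atTop_atTop.eventually_ge_atTop
    (4 * l * K ^ 4 / σ)] with n hNn hn
  refine (h.setIntegral_exp_confined_succ_le hδ hl hNn).trans <|
    mul_le_mul_of_nonneg_right ?_ (integral_nonneg fun ω => (Real.exp_pos _).le)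
  set s : ℝ := (n : ℝ) + 1 with hs_def
  have hs : 0 < s := n.cast_add_one_pos
  have hlarge : 4 * l * K ^ 4 ≤ σ * s := by
    rw [hs_def]
    linarith [(div_le_iff₀' hσ).1 hn]
  rw [← sub_nonneg]
  calc 0 ≤ l * (σ * s - 4 * l * K ^ 4) / (2 * s ^ 2) :=
        div_nonneg (mul_nonneg hl0.le (sub_nonneg.2 hlarge)) (by positivity)
    _ = _ := by field_simp; ring

lemma integrable_bump (h : IsRepelling x F μ z δ K σ) (r : ℝ) (n : ℕ) :
    Integrable (fun ω => bump r (x n ω - z)) μ :=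
  h.integrable_comp_sub (continuous_bump r)
    (fun y => (Real.norm_of_nonneg (bump_nonneg r y)).trans_le (bump_le r y)) n

lemma setIntegral_bump_succ_le (h : IsRepelling x F μ z δ K σ) {r : ℝ} (hr : 0 ≤ r)
    (hB : MeasurableSet[F n] B) (hBδ : ∀ ω ∈ B, |x n ω - z| < δ) :
    ∫ ω in B, bump r (x (n + 1) ω - z) ∂μ
      ≤ ∫ ω in B, bump r (x n ω - z) ∂μ + 4 * r ^ 2 * (K / ((n : ℝ) + 1)) ^ 2 := by
  have hbump := continuous_bump r
  set e : ℝ := 4 * r ^ 2 * (K / ((n : ℝ) + 1)) ^ 2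
  calc ∫ ω in B, bump r (x (n + 1) ω - z) ∂μ
      ≤ ∫ ω in B, (bump r (x n ω - z) + e - 0 * (σ / ((n : ℝ) + 1) ^ 2)) ∂μ := by
        refine h.setIntegral_comp_succ_le hB hBδ (a := fun y => bump r y + e)
          (b := fun y => 4 * max (r ^ 2 - y ^ 2) 0) (c := fun _ => 0)
          hbump (by fun_prop) (by fun_prop) (by fun_prop) (fun y => by positivity)
          (fun _ => le_rfl) fun y d _ hd => ?_
        have hde : 4 * r ^ 2 * d ^ 2 ≤ e := by
          rw [← sq_abs d]
          exact mul_le_mul_of_nonneg_left (pow_le_pow_left₀ (abs_nonneg d) hd 2) (by positivity)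
        linarith [bump_add_le hr y d]
    _ = ∫ ω in B, bump r (x n ω - z) ∂μ + μ.real B * e := by
        simp only [zero_mul, sub_zero]
        rw [integral_add (h.integrable_bump r n).integrableOn (integrable_const e),
          setIntegral_const, smul_eq_mul]
    _ ≤ ∫ ω in B, bump r (x n ω - z) ∂μ + e := by
        gcongr
        exact mul_le_of_le_one_left (by positivity) measureReal_le_one

lemma setIntegral_bump_le (h : IsRepelling x F μ z δ K σ) {r : ℝ} (hr : 0 ≤ r) {k : ℕ}
    (hn : n ≠ 0) (hNn : N ≤ n) (hnk : n ≤ k) :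
    ∫ ω in confined x z δ N k ∩ {ω | r ≤ |x n ω - z|}, bump r (x k ω - z) ∂μ
      ≤ 4 * r ^ 2 * K ^ 2 * (1 / n - 1 / k) := by
  set A : ℕ → Set Ω := fun k => confined x z δ N k ∩ {ω | r ≤ |x n ω - z|}
  have hA {k : ℕ} (hnk : n ≤ k) : MeasurableSet[F k] (A k) := by
    have hfar : MeasurableSet {y : ℝ | r ≤ |y - z|} :=
      measurableSet_le measurable_const (by fun_prop)
    exact (measurableSet_confined h.adapted z δ N k).inter
      ((h.adapted n).mono (F.mono hnk) le_rfl hfar)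
  induction k, hnk using Nat.le_induction with
  | base =>
    rw [setIntegral_eq_zero_of_forall_eq_zero fun ω hω => bump_eq_zero hr hω.2, sub_self, mul_zero]
  | succ k hnk ih =>
    have hk : (0 : ℝ) < k := by exact_mod_cast (pos_of_ne_zero hn).trans_le hnk
    calc ∫ ω in A (k + 1), bump r (x (k + 1) ω - z) ∂μ
        ≤ ∫ ω in A k, bump r (x (k + 1) ω - z) ∂μ :=
          setIntegral_mono_set (h.integrable_bump r (k + 1)).integrableOn
            (.of_forall fun _ => bump_nonneg _ _)
            (inter_subset_inter_left _ (antitone_confined x z δ N k.le_succ)).eventuallyLE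
      _ ≤ ∫ ω in A k, bump r (x k ω - z) ∂μ + 4 * r ^ 2 * (K / ((k : ℝ) + 1)) ^ 2 :=
          h.setIntegral_bump_succ_le hr (hA hnk) fun ω hω => hω.1 k (hNn.trans hnk) le_rfl
      _ ≤ 4 * r ^ 2 * K ^ 2 * (1 / n - 1 / k) + 4 * r ^ 2 * K ^ 2 * (1 / k - 1 / (k + 1)) := by
          have htel : (1 / ((k : ℝ) + 1)) ^ 2 ≤ 1 / k - 1 / (k + 1) := by
            rw [div_sub_div _ _ hk.ne' (by positivity), div_pow,
              div_le_div_iff₀ (by positivity) (by positivity)]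
            nlinarith
          rw [div_eq_mul_one_div K, mul_pow, ← mul_assoc]
          gcongr
      _ = 4 * r ^ 2 * K ^ 2 * (1 / n - 1 / (k + 1 : ℕ)) := by push_cast; ring

lemma measureReal_trapped_inter_le (h : IsRepelling x F μ z δ K σ) {r : ℝ} (hr : 0 < r)
    (hn : n ≠ 0) (hNn : N ≤ n) :
    μ.real (trapped x z δ N ∩ {ω | r ≤ |x n ω - z|}) ≤ 4 * K ^ 2 / (n * r ^ 2) := by
  set T : Set Ω := trapped x z δ N ∩ {ω | r ≤ |x n ω - z|}
  have hT : MeasurableSet T := (measurableSet_trapped h.measurable z δ N).inter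
    (measurableSet_le measurable_const ((h.measurable n).sub_const z).abs)
  have hlim : Tendsto (fun k => ∫ ω in T, bump r (x k ω - z) ∂μ) atTop
      (𝓝 (∫ _ in T, bump r 0 ∂μ)) := by
    refine tendsto_integral_of_dominated_convergence (fun _ => r ^ 4)
      (fun k => (h.integrable_bump r k).aestronglyMeasurable.restrict) (integrable_const _)
      (fun k => .of_forall fun _ => ?_) ?_
    · exact (Real.norm_of_nonneg (bump_nonneg _ _)).trans_le (bump_le _ _)
    · filter_upwards [ae_restrict_mem hT] with ω hω
      exact ((continuous_bump r).tendsto 0).comp (tendsto_sub_nhds_zero_iff.2 hω.1.2)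
  have hbound : ∫ _ in T, bump r 0 ∂μ ≤ 4 * r ^ 2 * K ^ 2 * (1 / n) := by
    refine le_of_tendsto hlim (eventually_atTop.2 ⟨n, fun k hk => ?_⟩)
    calc ∫ ω in T, bump r (x k ω - z) ∂μ
        ≤ ∫ ω in confined x z δ N k ∩ {ω | r ≤ |x n ω - z|}, bump r (x k ω - z) ∂μ :=
          setIntegral_mono_set (h.integrable_bump r k).integrableOn
            (.of_forall fun _ => bump_nonneg _ _)
            (inter_subset_inter_left _ (trapped_subset_confined x z δ N k)).eventuallyLE
      _ ≤ 4 * r ^ 2 * K ^ 2 * (1 / n - 1 / k) := h.setIntegral_bump_le hr.le hn hNn hk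
      _ ≤ 4 * r ^ 2 * K ^ 2 * (1 / n) :=
          mul_le_mul_of_nonneg_left (sub_le_self _ (by positivity)) (by positivity)
  rw [setIntegral_const, smul_eq_mul, bump_zero] at hbound
  have : (0 : ℝ) < n := by exact_mod_cast pos_of_ne_zero hn
  refine le_of_mul_le_mul_right (hbound.trans_eq ?_) (pow_pos hr 4)
  field_simp

lemma measureReal_confined_inter_le (h : IsRepelling x F μ z δ K σ) {l : ℝ} (hl : 0 ≤ l)
    (R : ℝ) (N n : ℕ) :
    μ.real (confined x z δ N n ∩ {ω | n * (x n ω - z) ^ 2 ≤ R}) ≤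
      Real.exp (l * R) * ∫ ω in confined x z δ N n, Real.exp (-(l * n) * (x n ω - z) ^ 2) ∂μ := by
  set B := confined x z δ N n ∩ {ω | n * (x n ω - z) ^ 2 ≤ R}
  have hint := h.integrable_exp_neg_mul_sq (mul_nonneg hl n.cast_nonneg) n
  have hB : MeasurableSet B := (F.le n _ (measurableSet_confined h.adapted z δ N n)).inter
    (measurableSet_le ((((h.measurable n).sub_const z).pow_const 2).const_mul _) measurable_const)
  calc μ.real B = ∫ _ in B, 1 ∂μ := by simp
    _ ≤ ∫ ω in B, Real.exp (l * R) * Real.exp (-(l * n) * (x n ω - z) ^ 2) ∂μ := by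
        refine setIntegral_mono_on (integrable_const _).integrableOn
          (hint.const_mul _).integrableOn hB fun ω hω => ?_
        rw [← Real.exp_add, Real.one_le_exp_iff]
        linarith [mul_le_mul_of_nonneg_left hω.2 hl]
    _ = Real.exp (l * R) * ∫ ω in B, Real.exp (-(l * n) * (x n ω - z) ^ 2) ∂μ :=
        integral_const_mul _ _
    _ ≤ _ := mul_le_mul_of_nonneg_left
        (setIntegral_mono_set hint.integrableOn (.of_forall fun ω => (Real.exp_pos _).le)
          inter_subset_left.eventuallyLE) (Real.exp_pos _).le

lemma measureReal_trapped_le (h : IsRepelling x F μ z δ K σ) (hδ : 0 < δ) (hK : 0 ≤ K)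
    (hσ : 0 < σ) {R : ℝ} (hR : 0 < R) (N : ℕ) :
    μ.real (trapped x z δ N) ≤ 4 * K ^ 2 / R := by
  set l := 1 / (2 * (δ + 2 * K) ^ 2) with hl
  have hvanish := (h.tendsto_setIntegral_exp_confined hδ hK hσ hl N).const_mul (Real.exp (l * R))
  have hlim := hvanish.add_const (4 * K ^ 2 / R)
  rw [mul_zero, zero_add] at hlim
  refine ge_of_tendsto hlim (eventually_atTop.2 ⟨N + 1, fun n hn => ?_⟩)
  have hn0 : (0 : ℝ) < n := by exact_mod_cast N.succ_pos.trans_le hn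
  have hfar : μ.real (trapped x z δ N ∩ {ω | √(R / n) ≤ |x n ω - z|}) ≤ 4 * K ^ 2 / R := by
    simpa only [Real.sq_sqrt (div_pos hR hn0).le, mul_div_cancel₀ R hn0.ne'] using
      h.measureReal_trapped_inter_le (Real.sqrt_pos.2 (div_pos hR hn0))
        (Nat.ne_zero_of_lt hn) (N.le_succ.trans hn)
  have hnear := h.measureReal_confined_inter_le (l := l) (by positivity) R N n
  refine le_trans ?_ (add_le_add hnear hfar)
  refine (measureReal_mono fun ω hω => ?_).trans (measureReal_union_le _ _)
  rcases le_or_gt (√(R / n)) |x n ω - z| with hle | hlt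
  · exact .inr ⟨hω, hle⟩
  · refine .inl ⟨trapped_subset_confined x z δ N n hω, ?_⟩
    rw [← Real.sqrt_sq_eq_abs] at hlt
    exact ((lt_div_iff₀' hn0).1 ((Real.sqrt_lt_sqrt_iff (sq_nonneg _)).1 hlt)).le

theorem measure_tendsto_eq_zero (h : IsRepelling x F μ z δ K σ) (hδ : 0 < δ) (hK : 0 ≤ K)
    (hσ : 0 < σ) : μ {ω | Tendsto (x · ω) atTop (𝓝 z)} = 0 := by
  have hnull (N : ℕ) : μ (trapped x z δ N) = 0 := by
    rw [← measureReal_eq_zero_iff]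
    exact le_antisymm (ge_of_tendsto (tendsto_const_nhds.div_atTop tendsto_id)
      ((eventually_gt_atTop 0).mono fun R hR => h.measureReal_trapped_le hδ hK hσ hR N))
      measureReal_nonneg
  refine measure_mono_null (fun ω hω => mem_iUnion.2 ?_) (measure_iUnion_null hnull)
  obtain ⟨N, hN⟩ := Metric.tendsto_atTop.1 (mem_ofPred_eq.mp hω) δ hδ
  exact ⟨N, hN, hω⟩

end IsRepelling

end Repelling

section TransitionProbabilities

variable {m : ℕ} {p : ℕ → ℝ} {x : ℝ}

/-- The probability, at normalized red degree `x`, that a new node has `i.1` red neighbours and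
that it is red if `i.2 = true`, blue otherwise. -/
def transitionProb (m : ℕ) (p : ℕ → ℝ) (x : ℝ) (i : Fin (m + 1) × Bool) : ℝ :=
  (bernsteinPolynomial ℝ m i.1).eval x * bif i.2 then p i.1 else 1 - p i.1

/-- The increase of the red degree when a node with `i.1` red neighbours joins, the node being red
if `i.2 = true` and blue otherwise. -/
def redDegreeStep (m : ℕ) (i : Fin (m + 1) × Bool) : ℕ := i.1 + m * i.2.toNat

/-- The second moment of the increase of the red degree, measured relative to the increase `2 m x`
that would leave the normalized red degree `x` unchanged. -/
def stepSecondMoment (m : ℕ) (p : ℕ → ℝ) (x : ℝ) : ℝ :=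
  ∑ i, transitionProb m p x i * (redDegreeStep m i - 2 * m * x) ^ 2

lemma continuous_transitionProb (m : ℕ) (p : ℕ → ℝ) (i : Fin (m + 1) × Bool) :
    Continuous fun x => transitionProb m p x i := by
  unfold transitionProb
  fun_prop

lemma continuous_stepSecondMoment (m : ℕ) (p : ℕ → ℝ) : Continuous (stepSecondMoment m p) := by
  have := continuous_transitionProb m p
  unfold stepSecondMoment
  fun_prop

lemma eval_bernsteinPolynomial (m k : ℕ) (x : ℝ) :
    (bernsteinPolynomial ℝ m k).eval x = m.choose k * x ^ k * (1 - x) ^ (m - k) := by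
  simp [bernsteinPolynomial]

lemma eval_bernsteinPolynomial_pos (hx : x ∈ Ioo (0 : ℝ) 1) {k : ℕ} (hk : k ≤ m) :
    0 < (bernsteinPolynomial ℝ m k).eval x := by
  have hx0 := hx.1
  have hx1 := sub_pos.2 hx.2
  have hchoose := Nat.choose_pos hk
  rw [eval_bernsteinPolynomial]
  positivity

lemma transitionProb_nonneg (hp : ∀ k ≤ m, p k ∈ Icc (0 : ℝ) 1) (hx : x ∈ Icc (0 : ℝ) 1)
    (i : Fin (m + 1) × Bool) : 0 ≤ transitionProb m p x i := by
  have hx0 := hx.1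
  have hx1 := sub_nonneg.2 hx.2
  rw [transitionProb, eval_bernsteinPolynomial]
  refine mul_nonneg (by positivity) ?_
  cases i.2
  · exact sub_nonneg.2 (hp _ i.1.is_le).2
  · exact (hp _ i.1.is_le).1

lemma sum_transitionProb_mul (m : ℕ) (p : ℕ → ℝ) (x : ℝ) (f : ℕ → Bool → ℝ) :
    ∑ i, transitionProb m p x i * f i.1 i.2 = ∑ k ∈ Finset.range (m + 1),
      (bernsteinPolynomial ℝ m k).eval x * (p k * f k true + (1 - p k) * f k false) := by
  rw [Fintype.sum_prod_type, Finset.sum_range]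
  refine Finset.sum_congr rfl fun k _ => ?_
  rw [Fintype.sum_bool, transitionProb, transitionProb, cond_true, cond_false]
  ring

lemma sum_eval_bernsteinPolynomial (m : ℕ) (x : ℝ) :
    ∑ k ∈ Finset.range (m + 1), (bernsteinPolynomial ℝ m k).eval x = 1 := by
  simpa [Polynomial.eval_finsetSum] using congrArg (·.eval x) (bernsteinPolynomial.sum ℝ m)

lemma sum_eval_bernsteinPolynomial_mul (m : ℕ) (x : ℝ) :
    ∑ k ∈ Finset.range (m + 1), (bernsteinPolynomial ℝ m k).eval x * k = m * x := by
  simpa [Polynomial.eval_finsetSum, mul_comm] using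
    congrArg (·.eval x) (bernsteinPolynomial.sum_smul ℝ m)

lemma sum_transitionProb (m : ℕ) (p : ℕ → ℝ) (x : ℝ) : ∑ i, transitionProb m p x i = 1 := by
  simpa [sum_eval_bernsteinPolynomial] using sum_transitionProb_mul m p x fun _ _ => 1

lemma sum_transitionProb_mul_fst (m : ℕ) (p : ℕ → ℝ) (x : ℝ) :
    ∑ i, transitionProb m p x i * (i.1 : ℕ) = m * x := by
  rw [sum_transitionProb_mul m p x fun k _ => k]
  simpa [← add_mul] using sum_eval_bernsteinPolynomial_mul m x

lemma sum_transitionProb_mul_toNat (hm : m ≠ 0) (p : ℕ → ℝ) (x : ℝ) :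
    ∑ i, transitionProb m p x i * i.2.toNat = x + 2 * polyP m p x := by
  have hm' : (m : ℝ) ≠ 0 := Nat.cast_ne_zero.2 hm
  calc ∑ i, transitionProb m p x i * i.2.toNat
      = ∑ k ∈ Finset.range (m + 1), (bernsteinPolynomial ℝ m k).eval x * p k := by
        simpa using sum_transitionProb_mul m p x fun _ b => b.toNat
    _ = (∑ k ∈ Finset.range (m + 1), (bernsteinPolynomial ℝ m k).eval x * k) / m
          + ∑ k ∈ Finset.range (m + 1), (bernsteinPolynomial ℝ m k).eval x * (p k - k / m) := by
        rw [Finset.sum_div, ← Finset.sum_add_distrib]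
        refine Finset.sum_congr rfl fun k _ => ?_
        ring
    _ = x + 2 * polyP m p x := by
        rw [sum_eval_bernsteinPolynomial_mul, mul_div_cancel_left₀ _ hm', polyP]
        simp only [eval_bernsteinPolynomial]
        ring

lemma sum_transitionProb_mul_redDegreeStep_sub (hm : m ≠ 0) (p : ℕ → ℝ) (x : ℝ) :
    ∑ i, transitionProb m p x i * (redDegreeStep m i - 2 * m * x) = 2 * m * polyP m p x := by
  calc ∑ i, transitionProb m p x i * (redDegreeStep m i - 2 * m * x)
      = (∑ i, transitionProb m p x i * (i.1 : ℕ)) + m * (∑ i, transitionProb m p x i * i.2.toNat)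
          - 2 * m * x * ∑ i, transitionProb m p x i := by
        rw [Finset.mul_sum, Finset.mul_sum, ← Finset.sum_add_distrib, ← Finset.sum_sub_distrib]
        refine Finset.sum_congr rfl fun i _ => ?_
        rw [redDegreeStep]
        push_cast
        ring
    _ = 2 * m * polyP m p x := by
        rw [sum_transitionProb_mul_fst, sum_transitionProb_mul_toNat hm, sum_transitionProb]
        ring

lemma redDegreeStep_le (m : ℕ) (i : Fin (m + 1) × Bool) : redDegreeStep m i ≤ 2 * m := by
  have hk := i.1.is_le
  have hb := Nat.mul_le_mul_left m i.2.toNat_le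
  rw [redDegreeStep]
  omega

lemma degenerate_of_stepSecondMoment_eq_zero (hm : m ≠ 0) (hp : ∀ k ≤ m, p k ∈ Icc (0 : ℝ) 1)
    (hx : x ∈ Ioo (0 : ℝ) 1) (h : stepSecondMoment m p x = 0) :
    m = 1 ∧ p 0 = 1 ∧ p 1 = 0 ∧ x = 1 / 2 := by
  have hm' : (m : ℝ) ≠ 0 := Nat.cast_ne_zero.2 hm
  have hterm (i) := (Finset.sum_eq_zero_iff_of_nonneg fun i _ =>
    mul_nonneg (transitionProb_nonneg hp (Ioo_subset_Icc_self hx) i) (sq_nonneg _)).1 h i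
    (Finset.mem_univ i)
  have hred {k : ℕ} (hk : k ≤ m) : p k = 0 ∨ (k + m - 2 * m * x : ℝ) = 0 := by
    simpa [transitionProb, redDegreeStep, (eval_bernsteinPolynomial_pos hx hk).ne'] using
      hterm (⟨k, Nat.lt_succ_of_le hk⟩, true)
  have hblue {k : ℕ} (hk : k ≤ m) : p k = 1 ∨ (k - 2 * m * x : ℝ) = 0 := by
    simpa [transitionProb, redDegreeStep, (eval_bernsteinPolynomial_pos hx hk).ne', sub_eq_zero,
      eq_comm (a := (1 : ℝ))] using hterm (⟨k, Nat.lt_succ_of_le hk⟩, false)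
  have hp0 : p 0 = 1 := (hblue m.zero_le).resolve_right <| by
    simpa using ⟨hm, hx.1.ne'⟩
  have hxhalf : x = 1 / 2 := by
    have := (hred m.zero_le).resolve_left (by rw [hp0]; exact one_ne_zero)
    rw [Nat.cast_zero] at this
    exact mul_left_cancel₀ hm' (by linarith)
  have hp1 : p 1 = 0 := (hred (Nat.one_le_iff_ne_zero.2 hm)).resolve_right fun h1 => by
    rw [Nat.cast_one, hxhalf] at h1
    linarith
  have hm1 : (1 - 2 * m * x : ℝ) = 0 := by
    simpa [hp1] using hblue (Nat.one_le_iff_ne_zero.2 hm)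
  rw [hxhalf] at hm1
  exact ⟨by exact_mod_cast (show (m : ℝ) = 1 by linarith), hp0, hp1, hxhalf⟩

lemma stepSecondMoment_pos (hm : m ≠ 0) (hp : ∀ k ≤ m, p k ∈ Icc (0 : ℝ) 1)
    (hx : x ∈ Ioo (0 : ℝ) 1) (hpoly : ∀ᶠ y in 𝓝 x, 0 ≤ (y - x) * polyP m p y) :
    0 < stepSecondMoment m p x := by
  refine lt_of_le_of_ne (Finset.sum_nonneg fun i _ =>
    mul_nonneg (transitionProb_nonneg hp (Ioo_subset_Icc_self hx) i) (sq_nonneg _)) fun h => ?_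
  obtain ⟨rfl, hp0, hp1, rfl⟩ := degenerate_of_stepSecondMoment_eq_zero hm hp hx h.symm
  have hP (y : ℝ) : polyP 1 p y = 1 / 2 - y := by
    simp [polyP, Finset.sum_range_succ, hp0, hp1]
    ring
  obtain ⟨y, hy, hyne⟩ := ((hpoly.filter_mono nhdsWithin_le_nhds).and
    (self_mem_nhdsWithin (s := {(1 / 2 : ℝ)}ᶜ))).exists
  rw [hP] at hy
  nlinarith [sq_pos_of_ne_zero (sub_ne_zero.2 hyne)]

end TransitionProbabilities

namespace PAProcess

variable {Ω : Type} [MeasurableSpace Ω] (P : PAProcess Ω) {z : ℝ}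

instance : IsProbabilityMeasure P.μ := P.isProb

lemma m_ne_zero : P.m ≠ 0 := Nat.one_le_iff_ne_zero.1 P.hm

lemma cast_S (n : ℕ) : (P.S n : ℝ) = (P.X0 : ℝ) + P.Y0 + 2 * P.m * n := by
  simp [S]

lemma cast_S_succ (n : ℕ) : (P.S (n + 1) : ℝ) = P.S n + 2 * P.m := by
  rw [cast_S, cast_S]
  push_cast
  ring

lemma two_mul_mul_succ_le_S_succ (n : ℕ) : (2 * P.m * (n + 1) : ℝ) ≤ P.S (n + 1) := by
  rw [cast_S]
  push_cast
  exact le_add_of_nonneg_left (by positivity)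

lemma S_succ_le (n : ℕ) : (P.S (n + 1) : ℝ) ≤ P.S 1 * (n + 1) := by
  rw [cast_S, cast_S]
  push_cast
  nlinarith [mul_nonneg (add_nonneg P.X0.cast_nonneg P.Y0.cast_nonneg) (Nat.cast_nonneg (α := ℝ) n)]

lemma S_succ_pos (n : ℕ) : (0 : ℝ) < P.S (n + 1) := by
  have hm : (0 : ℝ) < P.m := Nat.cast_pos.2 P.hm
  exact lt_of_lt_of_le (by positivity) (P.two_mul_mul_succ_le_S_succ n)

lemma x_mem_Icc (n : ℕ) (ω : Ω) : P.x n ω ∈ Icc (0 : ℝ) 1 :=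
  ⟨by unfold x; positivity, div_le_one_of_le₀ (by exact_mod_cast P.hXle n ω) (Nat.cast_nonneg _)⟩

lemma S_mul_x (hS : 0 < P.S 0) (n : ℕ) (ω : Ω) : P.S n * P.x n ω = P.X n ω := by
  have hSn : (P.S n : ℝ) ≠ 0 := by
    rw [Nat.cast_ne_zero]
    simp only [S] at hS ⊢
    omega
  exact mul_div_cancel₀ _ hSn

lemma adapted_x : Adapted P.F P.x := fun n =>
  (measurable_from_nat (f := fun k => (k : ℝ) / P.S n)).comp (P.adaptedX n)

/-- The event that the `n`-th new node has `i.1` red neighbours and is red if `i.2 = true`, blue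
otherwise. -/
def stepEvent (n : ℕ) (i : Fin (P.m + 1) × Bool) : Set Ω :=
  {ω | P.A (n + 1) ω = P.A n ω + i.2.toNat ∧ P.X (n + 1) ω = P.X n ω + redDegreeStep P.m i}

lemma measurableSet_stepEvent (n : ℕ) (i : Fin (P.m + 1) × Bool) :
    MeasurableSet (P.stepEvent n i) := by
  have hA (n : ℕ) : Measurable (P.A n) := (P.adaptedA n).mono (P.F.le n) le_rfl
  have hX (n : ℕ) : Measurable (P.X n) := (P.adaptedX n).mono (P.F.le n) le_rfl
  exact (measurableSet_eq_fun (hA _) ((hA n).add_const _)).inter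
    (measurableSet_eq_fun (hX _) ((hX n).add_const _))

lemma pairwise_disjoint_stepEvent (n : ℕ) :
    Pairwise (Function.onFun Disjoint (P.stepEvent n)) := by
  refine fun i j hij => Set.disjoint_left.2 fun ω hi hj => hij ?_
  have htoNat : Function.Injective Bool.toNat := by decide
  have hb : i.2 = j.2 := htoNat (add_left_cancel (hi.1.symm.trans hj.1))
  have hstep := add_left_cancel (hi.2.symm.trans hj.2)
  rw [redDegreeStep, redDegreeStep, hb] at hstep
  exact Prod.ext (Fin.ext (add_right_cancel hstep)) hb

lemma condExp_indicator_stepEvent (n : ℕ) (i : Fin (P.m + 1) × Bool) :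
    P.μ[(P.stepEvent n i).indicator (fun _ => (1 : ℝ)) | P.F n]
      =ᵐ[P.μ] fun ω => transitionProb P.m P.p (P.x n ω) i := by
  simp only [transitionProb, eval_bernsteinPolynomial, x, cast_S]
  rcases i with ⟨k, _ | _⟩
  · simpa [stepEvent, redDegreeStep] using P.step_blue n k k.is_le
  · simpa [stepEvent, redDegreeStep, add_assoc] using P.step_red n k k.is_le

lemma ae_exists_mem_stepEvent (n : ℕ) : ∀ᵐ ω ∂P.μ, ∃ i, ω ∈ P.stepEvent n i := by
  refine ae_exists_mem_of_sum_condExp_indicator_eq_one (P.F.le n) (P.measurableSet_stepEvent n)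
    (P.pairwise_disjoint_stepEvent n) ?_
  filter_upwards [ae_all_iff.2 (P.condExp_indicator_stepEvent n)] with ω hω
  simp only [hω, sum_transitionProb]

lemma condExp_ae_eq_sum_transitionProb (n : ℕ) {f : Fin (P.m + 1) × Bool → ℝ → ℝ}
    (hf : ∀ i, Continuous (f i)) {H : Ω → ℝ}
    (hH : ∀ i, ∀ ω ∈ P.stepEvent n i, H ω = f i (P.x n ω)) :
    P.μ[H | P.F n] =ᵐ[P.μ] fun ω => ∑ i, transitionProb P.m P.p (P.x n ω) i * f i (P.x n ω) := by
  have hx := (P.adapted_x n).stronglyMeasurable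
  have hpartition := condExp_ae_eq_sum_of_partition (P.measurableSet_stepEvent n)
    (P.pairwise_disjoint_stepEvent n) (P.ae_exists_mem_stepEvent n)
    (fun i => (hf i).comp_stronglyMeasurable hx)
    (fun i => integrable_continuous_comp_of_ae_norm_le (hf i) (C := 1)
      (hx.mono (P.F.le n)).aestronglyMeasurable
      (.of_forall fun ω => (Real.norm_of_nonneg (P.x_mem_Icc n ω).1).trans_le (P.x_mem_Icc n ω).2))
    hH
  filter_upwards [hpartition, ae_all_iff.2 (P.condExp_indicator_stepEvent n)] with ω hω hprob
  simp only [hω, hprob, mul_comm]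

lemma x_succ_sub (hS : 0 < P.S 0) {n : ℕ} {i : Fin (P.m + 1) × Bool} {ω : Ω}
    (hω : ω ∈ P.stepEvent n i) :
    P.x (n + 1) ω - P.x n ω = (redDegreeStep P.m i - 2 * P.m * P.x n ω) / P.S (n + 1) := by
  have hX : (P.X (n + 1) ω : ℝ) = P.X n ω + redDegreeStep P.m i := by exact_mod_cast hω.2
  rw [eq_div_iff (P.S_succ_pos n).ne', sub_mul, mul_comm (P.x _ _), S_mul_x P hS, hX,
    ← S_mul_x P hS n, cast_S_succ]
  ring

lemma ae_abs_x_succ_sub_le (hS : 0 < P.S 0) (n : ℕ) :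
    ∀ᵐ ω ∂P.μ, |P.x (n + 1) ω - P.x n ω| ≤ 1 / ((n : ℝ) + 1) := by
  filter_upwards [P.ae_exists_mem_stepEvent n] with ω ⟨i, hω⟩
  obtain ⟨hx0, hx1⟩ := P.x_mem_Icc n ω
  have hm : (0 : ℝ) < P.m := Nat.cast_pos.2 P.hm
  have hstep : (redDegreeStep P.m i : ℝ) ≤ 2 * P.m := by exact_mod_cast redDegreeStep_le P.m i
  have hmx : 2 * P.m * P.x n ω ≤ 2 * P.m := mul_le_of_le_one_right (by positivity) hx1
  have hnum : |redDegreeStep P.m i - 2 * P.m * P.x n ω| ≤ 2 * P.m :=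
    abs_sub_le_of_nonneg_of_le (Nat.cast_nonneg _) hstep (by positivity) hmx
  rw [P.x_succ_sub hS hω, abs_div, abs_of_pos (P.S_succ_pos n),
    div_le_div_iff₀ (P.S_succ_pos n) (by positivity), one_mul]
  exact (mul_le_mul_of_nonneg_right hnum (by positivity)).trans (P.two_mul_mul_succ_le_S_succ n)

lemma condExp_x_succ_sub (hS : 0 < P.S 0) (n : ℕ) :
    P.μ[fun ω => P.x (n + 1) ω - P.x n ω | P.F n]
      =ᵐ[P.μ] fun ω => 2 * P.m * P.poly (P.x n ω) / P.S (n + 1) := by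
  filter_upwards [P.condExp_ae_eq_sum_transitionProb n
    (f := fun i y => (redDegreeStep P.m i - 2 * P.m * y) / P.S (n + 1)) (by fun_prop)
    fun i ω => P.x_succ_sub hS] with ω hω
  simp only [hω, poly, ← mul_div_assoc, ← Finset.sum_div,
    sum_transitionProb_mul_redDegreeStep_sub P.m_ne_zero]

lemma condExp_sq_x_succ_sub (hS : 0 < P.S 0) (n : ℕ) :
    P.μ[fun ω => (P.x (n + 1) ω - P.x n ω) ^ 2 | P.F n]
      =ᵐ[P.μ] fun ω => stepSecondMoment P.m P.p (P.x n ω) / P.S (n + 1) ^ 2 := by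
  filter_upwards [P.condExp_ae_eq_sum_transitionProb n
    (H := fun ω => (P.x (n + 1) ω - P.x n ω) ^ 2)
    (f := fun i y => (redDegreeStep P.m i - 2 * P.m * y) ^ 2 / P.S (n + 1) ^ 2) (by fun_prop)
    fun i ω hω => by rw [P.x_succ_sub hS hω, div_pow]] with ω hω
  simp only [hω, stepSecondMoment, ← mul_div_assoc, ← Finset.sum_div]

lemma exists_isRepelling_x (hS : 0 < P.S 0) (hz : z ∈ Ioo (0 : ℝ) 1)
    (hpoly : ∀ᶠ y in 𝓝 z, 0 ≤ (y - z) * P.poly y) :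
    ∃ δ > 0, ∃ σ > 0, IsRepelling P.x P.F P.μ z δ 1 σ := by
  set v := stepSecondMoment P.m P.p
  have hvz : 0 < v z := stepSecondMoment_pos P.m_ne_zero P.hp hz hpoly
  have hv : ∀ᶠ y in 𝓝 z, v z / 2 < v y :=
    (continuous_stepSecondMoment P.m P.p).continuousAt.eventually (lt_mem_nhds (half_lt_self hvz))
  obtain ⟨δ, hδ, hball⟩ := Metric.eventually_nhds_iff.1 (hpoly.and hv)
  have hS1 := P.S_succ_pos 0
  refine ⟨δ, hδ, v z / 2 / P.S 1 ^ 2, by positivity, P.adapted_x, P.ae_abs_x_succ_sub_le hS,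
    fun n => ?_, fun n => ?_⟩
  · filter_upwards [P.condExp_x_succ_sub hS n] with ω hω hclose
    rw [hω]
    calc 0 ≤ 2 * P.m / P.S (n + 1) * ((P.x n ω - z) * P.poly (P.x n ω)) :=
          mul_nonneg (by positivity) (hball hclose).1
      _ = (P.x n ω - z) * (2 * P.m * P.poly (P.x n ω) / P.S (n + 1)) := by ring
  · filter_upwards [P.condExp_sq_x_succ_sub hS n] with ω hω hclose
    have hSn := P.S_succ_pos n
    rw [hω, div_div, ← mul_pow]
    exact div_le_div₀ ((half_pos hvz).trans (hball hclose).2).le (hball hclose).2.le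
      (by positivity) (pow_le_pow_left₀ hSn.le (P.S_succ_le n) 2)

lemma measure_tendsto_x_eq_zero (hS : 0 < P.S 0) (hz : z ∈ Ioo (0 : ℝ) 1)
    (hpoly : ∀ᶠ y in 𝓝 z, 0 ≤ (y - z) * P.poly y) :
    P.μ {ω | Tendsto (P.x · ω) atTop (𝓝 z)} = 0 := by
  obtain ⟨δ, hδ, σ, hσ, h⟩ := P.exists_isRepelling_x hS hz hpoly
  exact h.measure_tendsto_eq_zero hδ zero_le_one hσ

/-- The fluctuation of the number `X_{n+1} - X_n - m (A_{n+1} - A_n)` of red neighbours of the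
`n`-th new node around its conditional mean `m x_n`. -/
def neighbourNoise (n : ℕ) (ω : Ω) : ℝ :=
  (P.X (n + 1) ω - P.X n ω) - P.m * (P.A (n + 1) ω - P.A n ω) - P.m * P.x n ω

lemma neighbourNoise_eq {n : ℕ} {i : Fin (P.m + 1) × Bool} {ω : Ω} (hω : ω ∈ P.stepEvent n i) :
    P.neighbourNoise n ω = (i.1 : ℕ) - P.m * P.x n ω := by
  rw [neighbourNoise, hω.1, hω.2, redDegreeStep]
  push_cast
  ring

lemma isMartingaleDifference_neighbourNoise :
    IsMartingaleDifference P.neighbourNoise P.F P.μ fun _ => P.m where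
  stronglyMeasurable n := by
    have hA (k : ℕ) : Measurable[P.F k] fun ω => (P.A k ω : ℝ) :=
      measurable_from_nat.comp (P.adaptedA k)
    have hX (k : ℕ) : Measurable[P.F k] fun ω => (P.X k ω : ℝ) :=
      measurable_from_nat.comp (P.adaptedX k)
    have hF := P.F.mono n.le_succ
    exact ((((hX (n + 1)).sub ((hX n).mono hF le_rfl)).sub
      (((hA (n + 1)).sub ((hA n).mono hF le_rfl)).const_mul _)).sub
      (((P.adapted_x n).mono hF le_rfl).const_mul _)).stronglyMeasurable
  abs_le n := by
    filter_upwards [P.ae_exists_mem_stepEvent n] with ω ⟨i, hω⟩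
    obtain ⟨hx0, hx1⟩ := P.x_mem_Icc n ω
    rw [P.neighbourNoise_eq hω]
    exact abs_sub_le_of_nonneg_of_le (Nat.cast_nonneg _) (Nat.cast_le.2 i.1.is_le) (by positivity)
      (mul_le_of_le_one_right (Nat.cast_nonneg _) hx1)
  condExp_eq_zero n := by
    filter_upwards [P.condExp_ae_eq_sum_transitionProb n (f := fun i y => (i.1 : ℕ) - P.m * y)
      (by fun_prop) fun i ω => P.neighbourNoise_eq] with ω hω
    simp only [hω, mul_sub, Finset.sum_sub_distrib, ← Finset.sum_mul, sum_transitionProb,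
      sum_transitionProb_mul_fst, one_mul, sub_self, Pi.zero_apply]

lemma sum_neighbourNoise (n : ℕ) (ω : Ω) :
    ∑ i ∈ Finset.range n, P.neighbourNoise i ω
      = P.X n ω - P.X0 - P.m * (P.A n ω - P.A0) - P.m * ∑ i ∈ Finset.range n, P.x i ω := by
  simp only [neighbourNoise, Finset.sum_sub_distrib, ← Finset.mul_sum]
  rw [← Finset.sum_sub_distrib, ← Finset.sum_sub_distrib,
    Finset.sum_range_sub (fun i => (P.X i ω : ℝ)), Finset.sum_range_sub (fun i => (P.A i ω : ℝ)),
    P.hX0, P.hA0]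

lemma tendsto_A_div {ω : Ω} (ha : Tendsto (P.a · ω) atTop (𝓝 z)) :
    Tendsto (fun n : ℕ => (P.A n ω : ℝ) / n) atTop (𝓝 z) := by
  have hlim := ha.mul (tendsto_const_div_atTop_nhds_zero_nat ((P.A0 : ℝ) + P.B0) |>.add_const 1)
  rw [zero_add, mul_one] at hlim
  refine hlim.congr' ?_
  filter_upwards [eventually_gt_atTop 0] with n hn
  have : (0 : ℝ) < n := Nat.cast_pos.2 hn
  rw [a]
  field_simp

lemma two_mul_x_sub_average_eq (hS : 0 < P.S 0) {n : ℕ} (hn : n ≠ 0) (ω : Ω) :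
    2 * P.x n ω + (1 - 2) * ((∑ i ∈ Finset.range n, P.x i ω) / n)
      = P.A n ω / n + ((∑ i ∈ Finset.range n, P.neighbourNoise i ω) / n) / P.m
        + (P.X0 / P.m - P.A0) / n - P.S 0 / P.m / n * P.x n ω := by
  have hm : (P.m : ℝ) ≠ 0 := Nat.cast_ne_zero.2 P.m_ne_zero
  have hn' : (n : ℝ) ≠ 0 := Nat.cast_ne_zero.2 hn
  have hSn : (P.S n : ℝ) = P.S 0 + 2 * P.m * n := by simp [cast_S]
  rw [sum_neighbourNoise, ← P.S_mul_x hS, hSn]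
  field_simp
  ring

lemma tendsto_x_of_tendsto_a (hS : 0 < P.S 0) {ω : Ω}
    (hnoise : Tendsto (fun n : ℕ => (∑ i ∈ Finset.range n, P.neighbourNoise i ω) / n) atTop (𝓝 0))
    (ha : Tendsto (P.a · ω) atTop (𝓝 z)) : Tendsto (P.x · ω) atTop (𝓝 z) := by
  refine tendsto_of_tendsto_add_average two_pos ?_
  have hxdiv : Tendsto (fun n : ℕ => (P.S 0 : ℝ) / P.m / n * P.x n ω) atTop (𝓝 0) :=
    (tendsto_const_div_atTop_nhds_zero_nat _).zero_mul_isBoundedUnder_le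
      (isBoundedUnder_of ⟨1, fun n =>
        (Real.norm_of_nonneg (P.x_mem_Icc n ω).1).trans_le (P.x_mem_Icc n ω).2⟩)
  have hlim := (((P.tendsto_A_div ha).add (hnoise.div_const (P.m : ℝ))).add
    (tendsto_const_div_atTop_nhds_zero_nat ((P.X0 : ℝ) / P.m - P.A0))).sub hxdiv
  rw [zero_div, add_zero, add_zero, sub_zero] at hlim
  refine hlim.congr' ?_
  filter_upwards [eventually_ne_atTop 0] with n hn using (P.two_mul_x_sub_average_eq hS hn ω).symm

end PAProcess

theorem nonlinear_model_unstable_equilibrium_general {Ω : Type} [MeasurableSpace Ω]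
    (P : PAProcess Ω) (hS : 0 < P.S 0) {z : ℝ} (hz : z ∈ Ioo (0 : ℝ) 1)
    (hpoly : ∀ᶠ y in 𝓝 z, 0 ≤ (y - z) * P.poly y) :
    P.μ {ω | Tendsto (P.a · ω) atTop (𝓝 z)} = 0 := by
  have hx : ∀ᵐ ω ∂P.μ, ¬ Tendsto (P.x · ω) atTop (𝓝 z) :=
    measure_eq_zero_iff_ae_notMem.1 (P.measure_tendsto_x_eq_zero hS hz hpoly)
  refine measure_eq_zero_iff_ae_notMem.2 ?_
  filter_upwards [hx, P.isMartingaleDifference_neighbourNoise.ae_tendsto_average_zero]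
    with ω hω hnoise ha using hω (P.tendsto_x_of_tendsto_a hS hnoise ha)

/-- **Nonlinear models, unstable equilibria.** In a nonlinear model with `X_0, Y_0 > 0`, if
`z ∈ Z_P ∩ (0,1)` is an unstable zero, i.e. there is `ε > 0` with `P < 0` on `(z−ε, z)` and
`P > 0` on `(z, z+ε)`, then the probability that `a_n → z` is zero. -/
theorem nonlinear_model_unstable_equilibrium
    {Ω : Type} [MeasurableSpace Ω] (P : PAProcess Ω)
    (hnonlin : ∃ k ≤ P.m, P.p k ≠ (k : ℝ) / P.m)
    (hX0 : 0 < P.X0) (hY0 : 0 < P.Y0)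
    (z : ℝ) (hz : z ∈ P.Zp ∩ Set.Ioo (0 : ℝ) 1)
    (ε : ℝ) (hε : 0 < ε)
    (hneg : ∀ y ∈ Set.Ioo (z - ε) z, P.poly y < 0)
    (hpos : ∀ y ∈ Set.Ioo z (z + ε), 0 < P.poly y) :
    P.μ {ω | Tendsto (fun n => P.a n ω) atTop (nhds z)} = 0 := by
  have hS : 0 < P.S 0 := by
    rw [PAProcess.S]
    omega
  refine nonlinear_model_unstable_equilibrium_general P hS hz.2 ?_
  filter_upwards [Ioo_mem_nhds (sub_lt_self z hε) (lt_add_of_pos_right z hε)] with y hy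
  rcases lt_trichotomy y z with hlt | rfl | hgt
  · exact mul_nonneg_of_nonpos_of_nonpos (sub_neg.2 hlt).le (hneg y ⟨hy.1, hlt⟩).le
  · rw [sub_self, zero_mul]
  · exact mul_nonneg (sub_pos.2 hgt).le (hpos y ⟨hgt, hy.2⟩).le
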